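/- arXiv:2009.09260 — 2 statements merged into one kernel-verified Lean document; each statement's English description precedes it below -/
import Mathlib

section
/- Let X be a topological space and (f_t)_{t∈ℝ} a continuous flow on X that is topologically transitive. Then for every pair of nonempty open sets U, V ⊆ X, the set I(U,V) = { τ > 0 : f_{kτ}(U) ∩ V ≠ ∅ for some positive integer k } is open and dense in (0,∞). -/
/-- Hitting times of a topologically transitive flow are unbounded above. -/
theorem exists_large_hitting_time {X : Type*} [TopologicalSpace X]
    (f : ℝ → X → X)
    (hcont : Continuous fun p : ℝ × X => f p.1 p.2)
    (hf0 : ∀ x, f 0 x = x)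
    (hfadd : ∀ s t x, f (s + t) x = f s (f t x))
    (htrans : ∀ U V : Set X, IsOpen U → IsOpen V → U.Nonempty → V.Nonempty →
      ∃ t : ℝ, 0 < t ∧ (f t '' U ∩ V).Nonempty)
    {U V : Set X} (hU : IsOpen U) (hV : IsOpen V) (hUne : U.Nonempty) (hVne : V.Nonempty)
    (T : ℝ) : ∃ t : ℝ, T < t ∧ (f t '' U ∩ V).Nonempty := by
  have hopen : IsOpen (f (-T) ⁻¹' U) :=
    hU.preimage (hcont.comp (Continuous.prodMk_right (-T)))
  have hne : (f (-T) ⁻¹' U).Nonempty := by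
    obtain ⟨x, hx⟩ := hUne
    refine ⟨f T x, ?_⟩
    rwa [Set.mem_preimage, ← hfadd, neg_add_cancel, hf0]
  obtain ⟨t, ht, _, ⟨y, hy, rfl⟩, hyV⟩ := htrans _ V hopen hV hne hVne
  refine ⟨t + T, by linarith, f t y, ⟨f (-T) y, hy, ?_⟩, hyV⟩
  rw [← hfadd, add_neg_cancel_right]

/-- Every sufficiently large real has a quotient by a positive integer in `[τ, τ + ε)`. -/
theorem exists_nat_mul_eq_of_large {τ ε : ℝ} (hτ : 0 < τ) (hε : 0 < ε) :
    ∃ T : ℝ, ∀ t, T < t → ∃ k : ℕ, 0 < k ∧ ∃ σ, τ ≤ σ ∧ σ < τ + ε ∧ (k : ℝ) * σ = t := by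
  obtain ⟨N, hN⟩ := exists_nat_gt (τ / ε)
  refine ⟨(N + 1) * τ, fun t ht => ?_⟩
  have htpos : 0 < t := lt_trans (by positivity) ht
  have hlt : t < (⌊t / τ⌋₊ + 1) * τ := (div_lt_iff₀ hτ).1 (Nat.lt_floor_add_one _)
  have hle : ⌊t / τ⌋₊ * τ ≤ t := (le_div_iff₀ hτ).1 (Nat.floor_le (by positivity))
  have hNk : N + 1 ≤ ⌊t / τ⌋₊ :=
    Nat.le_floor (by push_cast; exact (le_div_iff₀ hτ).2 ht.le)
  generalize ⌊t / τ⌋₊ = k at hlt hle hNk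
  have hk : 0 < k := by omega
  have hk' : (0 : ℝ) < k := Nat.cast_pos.2 hk
  have hNk' : (N : ℝ) + 1 ≤ k := by exact_mod_cast hNk
  have hτε : τ < k * ε := (div_lt_iff₀ hε).1 (by linarith)
  refine ⟨k, hk, t / k, (le_div_iff₀ hk').2 (by linarith), (div_lt_iff₀ hk').2 (by linarith), ?_⟩
  field_simp

/-- For a topologically transitive continuous flow on a topological space and nonempty open
sets `U`, `V`, the set `I(U,V) = {τ > 0 : f_{kτ}(U) ∩ V ≠ ∅ for some k ≥ 1}` is open and
dense in `(0,∞)`. -/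
theorem stmt2 {X : Type*} [TopologicalSpace X]
    (f : ℝ → X → X)
    (hcont : Continuous fun p : ℝ × X => f p.1 p.2)
    (hf0 : ∀ x, f 0 x = x)
    (hfadd : ∀ s t x, f (s + t) x = f s (f t x))
    (htrans : ∀ U V : Set X, IsOpen U → IsOpen V → U.Nonempty → V.Nonempty →
      ∃ t : ℝ, 0 < t ∧ (f t '' U ∩ V).Nonempty)
    (U V : Set X) (hU : IsOpen U) (hV : IsOpen V) (hUne : U.Nonempty) (hVne : V.Nonempty) :
    IsOpen {τ : ℝ | 0 < τ ∧ ∃ k : ℕ, 0 < k ∧ (f ((k : ℝ) * τ) '' U ∩ V).Nonempty} ∧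
    Set.Ioi (0:ℝ) ⊆
      closure {τ : ℝ | 0 < τ ∧ ∃ k : ℕ, 0 < k ∧ (f ((k : ℝ) * τ) '' U ∩ V).Nonempty} := by
  constructor
  · refine isOpen_iff_mem_nhds.2 ?_
    rintro τ ⟨hτ, k, hk, _, ⟨x, hx, rfl⟩, hxV⟩
    have hc : Continuous fun σ : ℝ => f (k * σ) x :=
      hcont.comp ((continuous_const.mul continuous_id).prodMk continuous_const)
    filter_upwards [Ioi_mem_nhds hτ, (hV.preimage hc).mem_nhds hxV] with σ hσ hσV
    exact ⟨hσ, k, hk, _, ⟨x, hx, rfl⟩, hσV⟩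
  · intro τ hτ
    refine Metric.mem_closure_iff.2 fun ε hε => ?_
    obtain ⟨T, hT⟩ := exists_nat_mul_eq_of_large hτ hε
    obtain ⟨t, htT, ht⟩ :=
      exists_large_hitting_time f hcont hf0 hfadd htrans hU hV hUne hVne T
    obtain ⟨k, hk, σ, hτσ, hσ, rfl⟩ := hT t htT
    refine ⟨σ, ⟨lt_of_lt_of_le hτ hτσ, k, hk, ht⟩, ?_⟩
    rw [dist_comm, Real.dist_eq, abs_of_nonneg (by linarith)]
    linarith
end

section
/- Let (f_t)_{t∈ℝ} be a continuous flow on a compact metric space (X,d), φ : X → ℝ a continuous function, α ∈ ℝ, and Φ(y,t) = ∫_0^t φ(f_s y) ds. For r > 0 define the continuous-time Carathéodory set function m^F_r(Z) = sup_{T>0} inf { Σ_{(y,t)∈E} e^{Φ(y,t) − tα} : E ⊆ X × [T,∞) finite or countable, Z ⊆ ⋃_{(y,t)∈E} B_t(y,r) }, where B_t(y,r) is the flow Bowen ball; for τ > 0 define the discrete-time set function m^{τ,r}(Z) = sup_{N∈ℕ} inf { Σ_{(y,n)∈E} e^{Φ(y,nτ) − nτα} : E ⊆ X × {n ∈ ℕ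 : n ≥ N} finite or countable, Z ⊆ ⋃_{(y,n)∈E} B_n^{f_τ}(y,r) }, where B_n^{f_τ}(y,r) is the Bowen ball of the time-τ map. Then for every τ > 0, r > 0, and Z ⊆ X, m^{τ,r}(Z) ≤ e^{τ(‖φ‖_∞ + |α|)} · m^F_r(Z), where ‖φ‖_∞ = sup_{x∈X} |φ(x)|. -/
open scoped ENNReal

noncomputable section

/-- The Bowen ball of a flow: points whose orbit stays `r`-close to that of `y` for all
times in `[0,t]`. -/
def flowBowen {X : Type*} [MetricSpace X] (f : ℝ → X → X) (r : ℝ) (y : X) (t : ℝ) :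
    Set X :=
  {z | ∀ s ∈ Set.Icc (0:ℝ) t, dist (f s y) (f s z) < r}

/-- The Bowen ball of a map: points whose first `n` iterates stay `r`-close to those
of `y`. -/
def mapBowen {X : Type*} (g : X → X) [MetricSpace X] (r : ℝ) (y : X) (n : ℕ) : Set X :=
  {z | ∀ k < n, dist (g^[k] y) (g^[k] z) < r}

/-- The Birkhoff integral `Φ(y,t) = ∫_0^t φ(f_s y) ds` of `φ` along the flow `f`. -/
def birkhoff {X : Type*} (f : ℝ → X → X) (φ : X → ℝ) (y : X) (t : ℝ) : ℝ :=
  ∫ s in (0:ℝ)..t, φ (f s y)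

/-- The continuous-time Carathéodory set function defined via flow Bowen balls of radius
`r` with weights `e^{Φ(y,t) − tα}`. -/
def mFlow {X : Type*} [MetricSpace X] (f : ℝ → X → X) (φ : X → ℝ) (α r : ℝ)
    (Z : Set X) : ℝ≥0∞ :=
  ⨆ (T : ℝ) (_ : 0 < T),
    ⨅ (E : Set (X × ℝ)) (_ : E.Countable) (_ : ∀ p ∈ E, T ≤ p.2)
      (_ : Z ⊆ ⋃ p ∈ E, flowBowen f r p.1 p.2),
      ∑' p : E, ENNReal.ofReal (Real.exp (birkhoff f φ p.1.1 p.1.2 - p.1.2 * α))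

/-- The discrete-time Carathéodory set function defined via Bowen balls of the time-`τ`
map with radius `ρ` and weights `e^{Φ(y,nτ) − nτα}`. -/
def mMap {X : Type*} [MetricSpace X] (f : ℝ → X → X) (φ : X → ℝ) (α τ ρ : ℝ)
    (Z : Set X) : ℝ≥0∞ :=
  ⨆ N : ℕ,
    ⨅ (E : Set (X × ℕ)) (_ : E.Countable) (_ : ∀ p ∈ E, N ≤ p.2)
      (_ : Z ⊆ ⋃ p ∈ E, mapBowen (f τ) ρ p.1 p.2),
      ∑' p : E, ENNReal.ofReal
        (Real.exp (birkhoff f φ p.1.1 ((p.1.2 : ℝ) * τ) - (p.1.2 : ℝ) * τ * α))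

end

theorem iterate_flow {X : Type*} {f : ℝ → X → X} (hf0 : ∀ x, f 0 x = x)
    (hfadd : ∀ s t x, f (s + t) x = f s (f t x)) (τ : ℝ) (k : ℕ) (x : X) :
    (f τ)^[k] x = f (k * τ) x := by
  induction k with
  | zero => simp [hf0]
  | succ k ih =>
    rw [Function.iterate_succ_apply', ih, ← hfadd]
    congr 1
    push_cast
    ring

theorem flowBowen_subset_mapBowen {X : Type*} [MetricSpace X] {f : ℝ → X → X}
    (hf0 : ∀ x, f 0 x = x) (hfadd : ∀ s t x, f (s + t) x = f s (f t x))
    {τ t : ℝ} (hτ : 0 ≤ τ) {n : ℕ} (hn : n * τ ≤ t) (r : ℝ) (y : X) :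
    flowBowen f r y t ⊆ mapBowen (f τ) r y n := by
  intro z hz k hk
  rw [iterate_flow hf0 hfadd, iterate_flow hf0 hfadd]
  refine hz _ ⟨by positivity, le_trans ?_ hn⟩
  gcongr

/-- The Birkhoff integrals of a bounded function vary in time at rate at most its bound. -/
theorem birkhoff_sub_le {X : Type*} {f : ℝ → X → X} {φ : X → ℝ} {y : X} {M : ℝ}
    (hy : Continuous fun s => φ (f s y)) (hM : ∀ x, |φ x| ≤ M) (s t : ℝ) :
    birkhoff f φ y s - birkhoff f φ y t ≤ M * |s - t| := by
  unfold birkhoff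
  rw [intervalIntegral.integral_interval_sub_left (hy.intervalIntegrable _ _)
    (hy.intervalIntegrable _ _)]
  exact (Real.le_norm_self _).trans
    (intervalIntegral.norm_integral_le_of_norm_le_const fun x _ => hM (f x y))

theorem ENNReal.tsum_image_le {ι κ : Type*} (g : ι → κ) (s : Set ι) (w : κ → ℝ≥0∞) :
    ∑' q : g '' s, w q ≤ ∑' p : s, w (g p) :=
  ENNReal.tsum_le_tsum_comp_of_surjective (f := Set.imageFactorization g s)
    Set.imageFactorization_surjective fun q => w q

/-- The discrete-time Carathéodory set function of the time-`τ` map at radius `r` is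
bounded above by `e^{τ(‖φ‖_∞ + |α|)}` times the continuous-time one at the same radius. -/
theorem stmt14 {X : Type*} [MetricSpace X] [CompactSpace X]
    (f : ℝ → X → X)
    (hcont : Continuous fun p : ℝ × X => f p.1 p.2)
    (hf0 : ∀ x, f 0 x = x)
    (hfadd : ∀ s t x, f (s + t) x = f s (f t x))
    (φ : X → ℝ) (hφ : Continuous φ) (α : ℝ)
    (r τ : ℝ) (hr : 0 < r) (hτ : 0 < τ) :
    ∀ Z : Set X, mMap f φ α τ r Z ≤
      ENNReal.ofReal (Real.exp (τ * ((⨆ x : X, |φ x|) + |α|))) * mFlow f φ α r Z := by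
  intro Z
  set M := ⨆ x : X, |φ x|
  have hM : ∀ x, |φ x| ≤ M := le_ciSup (isCompact_range hφ.abs).bddAbove
  set C := ENNReal.ofReal (Real.exp (τ * (M + |α|))) with hC
  have hC0 : C ≠ 0 := by
    rw [hC, ENNReal.ofReal_ne_zero_iff]
    exact Real.exp_pos _
  have hCtop : C ≠ ∞ := ENNReal.ofReal_ne_top
  refine iSup_le fun N => ?_
  have hT : 0 < (N + 1 : ℝ) * τ := by positivity
  refine le_trans ?_ (mul_le_mul_right (le_iSup₂_of_le _ hT le_rfl) C)
  simp_rw [ENNReal.mul_iInf_of_ne hC0 hCtop, ← ENNReal.tsum_mul_left]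
  refine le_iInf fun E => le_iInf fun hE => le_iInf fun hET => le_iInf fun hZ => ?_
  let g : X × ℝ → X × ℕ := fun p => (p.1, ⌊p.2 / τ⌋₊)
  have hfloor : ∀ p ∈ E, (⌊p.2 / τ⌋₊ : ℝ) * τ ≤ p.2 := fun p hp =>
    (le_div_iff₀ hτ).1 (Nat.floor_le (div_nonneg (hT.le.trans (hET p hp)) hτ.le))
  refine iInf_le_of_le (g '' E) (iInf_le_of_le (hE.image g) (iInf_le_of_le ?_
    (iInf_le_of_le ?_ ?_)))
  · rintro _ ⟨p, hp, rfl⟩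
    refine Nat.le_floor ((le_div_iff₀ hτ).2 (le_trans ?_ (hET p hp)))
    gcongr
    linarith
  · refine hZ.trans (Set.iUnion₂_subset fun p hp => ?_)
    exact (flowBowen_subset_mapBowen hf0 hfadd hτ.le (hfloor p hp) r p.1).trans
      (Set.subset_biUnion_of_mem (u := fun q : X × ℕ => mapBowen (f τ) r q.1 q.2)
        (Set.mem_image_of_mem g hp))
  · refine (ENNReal.tsum_image_le g E fun q => ENNReal.ofReal
      (Real.exp (birkhoff f φ q.1 (q.2 * τ) - q.2 * τ * α))).trans
      (ENNReal.tsum_le_tsum ?_)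
    rintro ⟨⟨y, t⟩, hp⟩
    rw [hC, ← ENNReal.ofReal_mul (Real.exp_pos _).le, ← Real.exp_add]
    refine ENNReal.ofReal_le_ofReal (Real.exp_le_exp.2 ?_)
    have hle := hfloor _ hp
    have hlt : t < ((⌊t / τ⌋₊ : ℝ) + 1) * τ := (div_lt_iff₀ hτ).1 (Nat.lt_floor_add_one _)
    simp only [g] at hle ⊢
    set u := (⌊t / τ⌋₊ : ℝ) * τ
    have hut : |u - t| ≤ τ := by
      rw [abs_le]
      constructor <;> linarith
    have hflow : Continuous fun s => φ (f s y) :=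
      hφ.comp (hcont.comp (continuous_id.prodMk continuous_const))
    have hbirk : birkhoff f φ y u - birkhoff f φ y t ≤ M * τ :=
      (birkhoff_sub_le hflow hM u t).trans
        (mul_le_mul_of_nonneg_left hut ((abs_nonneg _).trans (hM y)))
    have hα : (t - u) * α ≤ τ * |α| := by
      refine (le_abs_self _).trans ?_
      rw [abs_mul, abs_sub_comm]
      gcongr
    linarith
end
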